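/- arXiv:2209.14505 — 2 statements merged into one kernel-verified Lean document; each statement's English description precedes it below -/
import Mathlib

section
/- (KKT conditions are necessary and sufficient for the prosumer's problem.) A point (l, g, zs, zb) ∈ Xpro is an optimal solution of the prosumer's problem if and only if there exist δ ∈ ℝ and κ ≥ 0 such that: 0 ≤ l ⊥ P0 − (P0/(α·Q0))·l − δ ≤ 0; 0 ≤ g ⊥ −C′(g) + δ − κ ≤ 0; 0 ≤ κ ⊥ g − G ≤ 0; 0 ≤ zs ⊥ (p + τs) − δ ≤ 0; and 0 ≤ zb ⊥ −(p + τb) + δ ≤ 0. -/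
/-- Prosumer objective: `x = (l, g, zs, zb)`. -/
noncomputable def fpro (P0 Q0 α p τs τb φ : ℝ) (C : ℝ → ℝ) (x : ℝ × ℝ × ℝ × ℝ) : ℝ :=
  (p + τs) * x.2.2.1 - (p + τb) * x.2.2.2
    + (∫ m in (0:ℝ)..x.1, (P0 - (P0 / (α * Q0)) * m)) - C x.2.1 - φ

/-- Prosumer feasible set: `x = (l, g, zs, zb)`. -/
def Xpro (R G : ℝ) : Set (ℝ × ℝ × ℝ × ℝ) :=
  {x | 0 ≤ x.1 ∧ 0 ≤ x.2.1 ∧ 0 ≤ x.2.2.1 ∧ 0 ≤ x.2.2.2 ∧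
       x.1 + x.2.2.1 - x.2.2.2 - x.2.1 - R = 0 ∧ x.2.1 ≤ G}

/-- `0 ≤ a ⊥ b ≤ 0` : complementarity of `a ≥ 0` and `b ≤ 0`. -/
def perp (a b : ℝ) : Prop := 0 ≤ a ∧ b ≤ 0 ∧ a * b = 0

lemma fpro_eq (P0 Q0 α p τs τb φ : ℝ) (C : ℝ → ℝ) (l g s b : ℝ) :
    fpro P0 Q0 α p τs τb φ C (l, g, s, b) =
      (p + τs) * s - (p + τb) * b + (P0 * l - (P0 / (α * Q0)) * (l ^ 2 / 2)) - C g - φ := by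
  have h : (∫ m in (0:ℝ)..l, (P0 - (P0 / (α * Q0)) * m))
      = P0 * l - (P0 / (α * Q0)) * (l ^ 2 / 2) := by
    rw [intervalIntegral.integral_sub (Continuous.intervalIntegrable (by fun_prop) _ _)
      (Continuous.intervalIntegrable (by fun_prop) _ _)]
    rw [intervalIntegral.integral_const_mul, integral_id]
    simp
    ring
  simp only [fpro]
  rw [h]

lemma convex_tangent (C : ℝ → ℝ) (hC : Differentiable ℝ C) (hc : ConvexOn ℝ Set.univ C)
    (a b : ℝ) : C a + deriv C a * (b - a) ≤ C b := by
  rcases lt_trichotomy a b with h | h | h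
  · have := hc.deriv_le_slope (Set.mem_univ a) (Set.mem_univ b) h (hC a)
    rw [slope_def_field, le_div_iff₀ (by linarith)] at this
    linarith
  · subst h; simp
  · have := hc.slope_le_deriv (Set.mem_univ b) (Set.mem_univ a) h (hC a)
    rw [slope_def_field, div_le_iff₀ (by linarith)] at this
    linarith

lemma deriv_nonpos_of_max (h : ℝ → ℝ) (h' : ℝ) (hd : HasDerivAt h h' 0)
    (hm : ∀ t, 0 < t → t < 1 → h t ≤ h 0) : h' ≤ 0 := by
  have h1 := (hasDerivWithinAt_iff_tendsto_slope' (s := Set.Ioi 0) (by simp)).1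
    (hd.hasDerivWithinAt (s := Set.Ioi 0))
  refine le_of_tendsto h1 ?_
  filter_upwards [Ioo_mem_nhdsGT (show (0:ℝ) < 1 by norm_num)] with t ht
  rw [slope_def_field]
  exact div_nonpos_of_nonpos_of_nonneg (by linarith [hm t ht.1 ht.2]) (by linarith [ht.1])

lemma exists_delta (A D S B G l g s b : ℝ) (hl : 0 ≤ l) (hg : 0 ≤ g) (hs : 0 ≤ s) (hb : 0 ≤ b)
    (hgG : g ≤ G)
    (VI : ∀ l' g' s' b', 0 ≤ l' → 0 ≤ g' → 0 ≤ s' → 0 ≤ b' → g' ≤ G →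
      (l' - l) + (s' - s) - (b' - b) - (g' - g) = 0 →
      A * (l' - l) - D * (g' - g) + S * (s' - s) - B * (b' - b) ≤ 0) :
    ∃ δ, ∀ l' g' s' b', 0 ≤ l' → 0 ≤ g' → 0 ≤ s' → 0 ≤ b' → g' ≤ G →
      A * (l' - l) - D * (g' - g) + S * (s' - s) - B * (b' - b) ≤
        δ * ((l' - l) + (s' - s) - (b' - b) - (g' - g)) := by
  let Lo : Set ℝ := {v | ∃ l' g' s' b' t, 0 ≤ l' ∧ 0 ≤ g' ∧ 0 ≤ s' ∧ 0 ≤ b' ∧ g' ≤ G ∧ 0 < t ∧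
      (l' - l) + (s' - s) - (b' - b) - (g' - g) = t ∧
      A * (l' - l) - D * (g' - g) + S * (s' - s) - B * (b' - b) = v * t}
  let Up : Set ℝ := {v | ∃ l' g' s' b' t, 0 ≤ l' ∧ 0 ≤ g' ∧ 0 ≤ s' ∧ 0 ≤ b' ∧ g' ≤ G ∧ 0 < t ∧
      (l' - l) + (s' - s) - (b' - b) - (g' - g) = -t ∧
      A * (l' - l) - D * (g' - g) + S * (s' - s) - B * (b' - b) = v * (-t)}
  have hLo : Lo.Nonempty := ⟨A, l + 1, g, s, b, 1, by linarith, hg, hs, hb, hgG, by norm_num,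
    by ring, by ring⟩
  have hUp : Up.Nonempty := ⟨B, l, g, s, b + 1, 1, hl, hg, hs, by linarith, hgG, by norm_num,
    by ring, by ring⟩
  have hle : ∀ v ∈ Lo, ∀ w ∈ Up, v ≤ w := by
    rintro v ⟨l1, g1, s1, b1, t, h1, h2, h3, h4, h5, ht, h6, h7⟩ w
      ⟨l2, g2, s2, b2, r, k1, k2, k3, k4, k5, hr, k6, k7⟩
    obtain ⟨c, d, hc, hd, hcd, hct⟩ : ∃ c d : ℝ, 0 < c ∧ 0 < d ∧ c + d = 1 ∧ c * t = d * r :=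
      ⟨r / (t + r), t / (t + r), by positivity, by positivity, by field_simp; ring,
        by field_simp⟩
    have hd1 : d = 1 - c := by linarith
    have := VI (c * l1 + d * l2) (c * g1 + d * g2) (c * s1 + d * s2) (c * b1 + d * b2)
      (by positivity) (by positivity) (by positivity) (by positivity)
      (by
        have := mul_le_mul_of_nonneg_left h5 hc.le
        have := mul_le_mul_of_nonneg_left k5 hd.le
        have : c * G + d * G = G := by rw [← add_mul, hcd, one_mul]
        linarith)
      (by
        have : c * t - d * r = 0 := by linarith
        have e : c * t + d * (-r) = 0 := by linarith
        rw [← h6, ← k6, hd1] at e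
        rw [hd1]
        linear_combination e)
    have e : c * (v * t) + d * (w * (-r)) ≤ 0 := by
      rw [← h7, ← k7]
      refine le_trans (le_of_eq ?_) this
      rw [hd1]; ring
    have e2 : (v - w) * (c * t) ≤ 0 := by
      have : d * (w * (-r)) = -w * (c * t) := by rw [hct]; ring
      rw [this] at e
      linarith
    have : 0 < c * t := by positivity
    by_contra hlt
    push Not at hlt
    have := mul_pos (sub_pos.2 hlt) this
    linarith
  obtain ⟨δ, hδ1, hδ2⟩ := exists_between_of_forall_le hLo hUp hle
  refine ⟨δ, ?_⟩
  intro l' g' s' b' h1 h2 h3 h4 h5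
  rcases lt_trichotomy 0 ((l' - l) + (s' - s) - (b' - b) - (g' - g)) with h | h | h
  · rw [← div_le_iff₀ h]
    exact hδ1 ⟨l', g', s', b', _, h1, h2, h3, h4, h5, h, rfl, (div_mul_cancel₀ _ h.ne').symm⟩
  · rw [← h, mul_zero]
    exact VI l' g' s' b' h1 h2 h3 h4 h5 h.symm
  · rw [← le_div_iff_of_neg h]
    refine hδ2 ⟨l', g', s', b', _, h1, h2, h3, h4, h5, neg_pos.2 h, (neg_neg _).symm, ?_⟩
    rw [neg_neg, div_mul_cancel₀ _ h.ne]

/-- (KKT conditions are necessary and sufficient for the prosumer's problem.)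
`x = (l, g, zs, zb) ∈ Xpro` is optimal iff there exist `δ ∈ ℝ` and `κ ≥ 0` satisfying the
complementarity system. -/
theorem prosumer_KKT_iff_optimal
    (P0 Q0 α R G p τs τb φ : ℝ)
    (hP0 : 0 < P0) (hQ0 : 0 < Q0) (hα0 : 0 < α) (hα1 : α < 1)
    (hR : 0 < R) (hG : 0 ≤ G) (hp : 0 ≤ p)
    (C : ℝ → ℝ) (hC : ContDiff ℝ 1 C) (hCconv : ConvexOn ℝ Set.univ C)
    (x : ℝ × ℝ × ℝ × ℝ) (hx : x ∈ Xpro R G) :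
    (∀ y ∈ Xpro R G, fpro P0 Q0 α p τs τb φ C y ≤ fpro P0 Q0 α p τs τb φ C x) ↔
    ∃ δ κ : ℝ, 0 ≤ κ ∧
      perp x.1 (P0 - (P0 / (α * Q0)) * x.1 - δ) ∧
      perp x.2.1 (-(deriv C x.2.1) + δ - κ) ∧
      perp κ (x.2.1 - G) ∧
      perp x.2.2.1 ((p + τs) - δ) ∧
      perp x.2.2.2 (-(p + τb) + δ) := by
  have hCd : Differentiable ℝ C := hC.differentiable (by norm_num)
  obtain ⟨l, g, s, b⟩ := x
  obtain ⟨hl, hg, hs, hb, heq, hgG⟩ := hx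
  simp only at hl hg hs hb heq hgG
  have hk : 0 < P0 / (α * Q0) := by positivity
  simp only [perp]
  constructor
  · intro hopt
    obtain ⟨δ, hδ⟩ := exists_delta (P0 - P0 / (α * Q0) * l) (deriv C g) (p + τs) (p + τb) G l g s b
      hl hg hs hb hgG (by
        intro l' g' s' b' h1 h2 h3 h4 h5 h6
        have lin : ∀ a c : ℝ, HasDerivAt (fun t : ℝ => a + t * (c - a)) (c - a) 0 := by
          intro a c
          simpa using ((hasDerivAt_id (0:ℝ)).mul_const (c - a)).const_add a
        have hCg : HasDerivAt (fun t : ℝ => C (g + t * (g' - g))) (deriv C g * (g' - g)) 0 := by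
          have h0 : HasDerivAt C (deriv C g) (g + 0 * (g' - g)) := by
            simpa using (hCd g).hasDerivAt
          exact h0.comp 0 (lin g g')
        have hder := (((((lin s s').const_mul (p + τs)).sub ((lin b b').const_mul (p + τb))).add
          (((lin l l').const_mul P0).sub
            ((((lin l l').pow 2).div_const 2).const_mul (P0 / (α * Q0))))).sub hCg).sub_const φ
        have hfin := deriv_nonpos_of_max _ _ hder (by
          intro t ht0 ht1
          have hcomb : ∀ a c : ℝ, 0 ≤ a → 0 ≤ c → 0 ≤ a + t * (c - a) := by
            intro a c ha hc
            nlinarith [mul_nonneg ht0.le hc, mul_nonneg (sub_nonneg.2 ht1.le) ha]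
          have := hopt (l + t * (l' - l), g + t * (g' - g), s + t * (s' - s), b + t * (b' - b))
            ⟨hcomb _ _ hl h1, hcomb _ _ hg h2, hcomb _ _ hs h3, hcomb _ _ hb h4,
              by simp only; linear_combination heq + t * h6,
              by
                simp only
                nlinarith [mul_le_mul_of_nonneg_left h5 ht0.le,
                  mul_le_mul_of_nonneg_left hgG (sub_nonneg.2 ht1.le)]⟩
          rw [fpro_eq, fpro_eq] at this
          simpa using this)
        norm_num at hfin
        linarith)
    have hA1 := hδ (l + 1) g s b (by linarith) hg hs hb hgG
    have hA2 := hδ 0 g s b le_rfl hg hs hb hgG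
    have hS1 := hδ l g (s + 1) b hl hg (by linarith) hb hgG
    have hS2 := hδ l g 0 b hl hg le_rfl hb hgG
    have hB1 := hδ l g s (b + 1) hl hg hs (by linarith) hgG
    have hB2 := hδ l g s 0 hl hg hs le_rfl hgG
    have hg1 := hδ l 0 s b hl le_rfl hs hb hG
    have hg2 := hδ l G s b hl hG hs hb le_rfl
    have A1 : P0 - P0 / (α * Q0) * l - δ ≤ 0 := by linarith
    have S1 : (p + τs) - δ ≤ 0 := by linarith
    have B1 : -(p + τb) + δ ≤ 0 := by linarith
    have G1 : 0 ≤ g * (δ - deriv C g) := by linarith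
    have G2 : (G - g) * (δ - deriv C g) ≤ 0 := by linarith
    refine ⟨δ, max 0 (δ - deriv C g), le_max_left _ _, ⟨hl, A1, ?_⟩, ⟨hg, ?_, ?_⟩,
      ⟨le_max_left _ _, by linarith, ?_⟩, ⟨hs, S1, ?_⟩, ⟨hb, B1, ?_⟩⟩
    · exact le_antisymm (mul_nonpos_of_nonneg_of_nonpos hl A1) (by linarith)
    · linarith [le_max_right 0 (δ - deriv C g)]
    · rcases le_total 0 (δ - deriv C g) with h | h
      · rw [max_eq_right h]; ring
      · rw [max_eq_left h]
        have := mul_nonpos_of_nonneg_of_nonpos hg h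
        linarith
    · rcases le_total 0 (δ - deriv C g) with h | h
      · rw [max_eq_right h]
        have := mul_nonneg (sub_nonneg.2 hgG) h
        linarith
      · rw [max_eq_left h]; ring
    · exact le_antisymm (mul_nonpos_of_nonneg_of_nonpos hs S1) (by linarith)
    · exact le_antisymm (mul_nonpos_of_nonneg_of_nonpos hb B1) (by linarith)
  · rintro ⟨δ, κ, hκ, ⟨-, A1, A2⟩, ⟨-, D1, D2⟩, ⟨-, -, K2⟩, ⟨-, S1, S2⟩, ⟨-, B1, B2⟩⟩
    rintro ⟨l', g', s', b'⟩ ⟨h1, h2, h3, h4, h5, h6⟩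
    simp only at *
    rw [fpro_eq, fpro_eq]
    have ht := convex_tangent C hCd hCconv g g'
    have a := mul_nonpos_of_nonneg_of_nonpos h1 A1
    have d := mul_nonpos_of_nonneg_of_nonpos h2 D1
    have e := mul_nonpos_of_nonneg_of_nonpos h3 S1
    have f := mul_nonpos_of_nonneg_of_nonpos h4 B1
    have k := mul_nonneg hκ (sub_nonneg.2 h6)
    have q := mul_nonneg hk.le (sq_nonneg (l' - l))
    have m1 : δ * (l' + s' - b' - g' - R) = 0 := by rw [h5, mul_zero]
    have m2 : δ * (l + s - b - g - R) = 0 := by rw [heq, mul_zero]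
    linarith
end

section
/- (Finiteness and convexity of the optimal value function.) For every (τb, τs) ∈ ℝ² with τs ≤ τb, the value V(τb, τs) = sup_{x ∈ X} Π(x; τb, τs) is finite. Moreover, V is a convex function on the rate set 𝒯. -/
/-- A lower-level decision vector `x = (d, l, zs, zb, g, (g_{ih}), y)`. -/
structure LVec (N : ℕ) (H : Fin N → Type) where
  d : Fin N → ℝ
  l : Fin N → ℝ
  zs : Fin N → ℝ
  zb : Fin N → ℝ
  g : Fin N → ℝ
  gih : (i : Fin N) → H i → ℝ
  y : Fin N → ℝ

/-- The lower-level feasible set `X`. -/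
def FeasX {N K : ℕ} {H : Fin N → Type} [∀ i, Fintype (H i)]
    (R Gp : Fin N → ℝ) (Gcap : (i : Fin N) → H i → ℝ)
    (T : Fin K → ℝ) (PTDF : Fin K → Fin N → ℝ) (x : LVec N H) : Prop :=
  (∀ i, 0 ≤ x.d i) ∧ (∀ i, 0 ≤ x.l i) ∧ (∀ i, 0 ≤ x.zs i) ∧ (∀ i, 0 ≤ x.zb i) ∧
  (∀ i, 0 ≤ x.g i) ∧ (∀ i (h : H i), 0 ≤ x.gih i h) ∧
  (∀ i, x.l i + x.zs i - x.zb i - x.g i - R i = 0) ∧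
  (∀ i, x.g i ≤ Gp i) ∧
  (∀ i (h : H i), x.gih i h ≤ Gcap i h) ∧
  (∑ i, x.y i = 0) ∧
  (∀ k, -T k ≤ ∑ i, PTDF k i * x.y i ∧ ∑ i, PTDF k i * x.y i ≤ T k) ∧
  (∀ i, x.y i - (∑ h, x.gih i h) - (x.zs i - x.zb i) + x.d i = 0)

/-- The social surplus `Π(x; τb, τs)`. -/
noncomputable def surplus {N : ℕ} {H : Fin N → Type} [∀ i, Fintype (H i)]
    (P0 Q0 α : Fin N → ℝ) (Cg : Fin N → ℝ → ℝ) (a A : (i : Fin N) → H i → ℝ)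
    (τb τs : ℝ) (x : LVec N H) : ℝ :=
  (∑ i, ((∫ m in (0:ℝ)..x.d i, (P0 i - (P0 i / ((1 - α i) * Q0 i)) * m)) - τb * x.d i))
  + (∑ i, (τs * x.zs i - τb * x.zb i
      + (∫ m in (0:ℝ)..x.l i, (P0 i - (P0 i / (α i * Q0 i)) * m)) - Cg i (x.g i)))
  - ∑ i, ∑ h, (a i h * x.gih i h + (1 / 2) * A i h * (x.gih i h) ^ 2)

/-- The optimal value function `V(τb, τs)` (as a real-valued supremum). -/
noncomputable def Vval {N K : ℕ} {H : Fin N → Type} [∀ i, Fintype (H i)]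
    (P0 Q0 α : Fin N → ℝ) (Cg : Fin N → ℝ → ℝ) (a A Gcap : (i : Fin N) → H i → ℝ)
    (R Gp : Fin N → ℝ) (T : Fin K → ℝ) (PTDF : Fin K → Fin N → ℝ)
    (τ : ℝ × ℝ) : ℝ :=
  sSup ((fun x => surplus P0 Q0 α Cg a A τ.1 τ.2 x) ''
    {x : LVec N H | FeasX R Gp Gcap T PTDF x})

/-- The rate set `𝒯`. -/
def Tset (τhat τlow : ℝ) : Set (ℝ × ℝ) :=
  {τ | 0 ≤ τ.1 ∧ τ.1 ≤ τhat ∧ τlow ≤ τ.2 ∧ τ.2 ≤ τ.1}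

theorem aux_int (P c d : ℝ) :
    (∫ m in (0:ℝ)..d, (P - c * m)) = P * d - c * d ^ 2 / 2 := by
  rw [intervalIntegral.integral_sub (by simp) (by
    apply Continuous.intervalIntegrable; fun_prop)]
  rw [intervalIntegral.integral_const_mul, integral_id]
  simp
  ring

theorem aux_quad (P c d t : ℝ) (hc : 0 < c) :
    P * d - c * d ^ 2 / 2 - t * d ≤ (P - t) ^ 2 / (2 * c) := by
  rw [le_div_iff₀ (by positivity)]
  nlinarith [sq_nonneg (c * d - (P - t))]

theorem aux_affine {N : ℕ} {H : Fin N → Type} [∀ i, Fintype (H i)]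
    (P0 Q0 α : Fin N → ℝ) (Cg : Fin N → ℝ → ℝ) (a A : (i : Fin N) → H i → ℝ)
    (τb τs : ℝ) (x : LVec N H) :
    surplus P0 Q0 α Cg a A τb τs x = surplus P0 Q0 α Cg a A 0 0 x
      + τs * (∑ i, x.zs i) - τb * (∑ i, x.d i + ∑ i, x.zb i) := by
  simp only [surplus, Finset.sum_sub_distrib, Finset.sum_add_distrib, ← Finset.mul_sum]
  ring

theorem aux_bdd {N K : ℕ} {H : Fin N → Type} [∀ i, Fintype (H i)]
    (P0 Q0 α R Gp : Fin N → ℝ) (Cg : Fin N → ℝ → ℝ)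
    (a A Gcap : (i : Fin N) → H i → ℝ)
    (T : Fin K → ℝ) (PTDF : Fin K → Fin N → ℝ)
    (hP0 : ∀ i, 0 < P0 i) (hQ0 : ∀ i, 0 < Q0 i)
    (hα0 : ∀ i, 0 < α i) (hα1 : ∀ i, α i < 1)
    (hCg : ∀ i, ContDiff ℝ 1 (Cg i))
    (ha : ∀ i (h : H i), 0 < a i h) (hA : ∀ i (h : H i), 0 < A i h)
    (τb τs : ℝ) (hτ : τs ≤ τb) :
    BddAbove ((fun x => surplus P0 Q0 α Cg a A τb τs x) ''
        {x : LVec N H | FeasX R Gp Gcap T PTDF x}) := by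
  have hm : ∀ i, ∃ m : ℝ, ∀ g ∈ Set.Icc 0 (Gp i), τs * g - Cg i g ≤ m := by
    intro i
    have hc : ContinuousOn (fun g => τs * g - Cg i g) (Set.Icc 0 (Gp i)) := by
      have := (hCg i).continuous
      fun_prop
    obtain ⟨m, hm⟩ := isCompact_Icc.bddAbove_image hc
    exact ⟨m, fun g hg => hm ⟨g, hg, rfl⟩⟩
  choose m hm using hm
  refine ⟨(∑ i, (P0 i - τb) ^ 2 / (2 * (P0 i / ((1 - α i) * Q0 i))))
    + (∑ i, (τs * R i + (P0 i - τs) ^ 2 / (2 * (P0 i / (α i * Q0 i))) + m i)), ?_⟩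
  rintro _ ⟨x, ⟨hd, hl, hzs, hzb, hg, hgih, hbal, hgp, -, -, -, -⟩, rfl⟩
  simp only [surplus, aux_int]
  have h1 : ∀ i, P0 i * x.d i - P0 i / ((1 - α i) * Q0 i) * x.d i ^ 2 / 2 - τb * x.d i
      ≤ (P0 i - τb) ^ 2 / (2 * (P0 i / ((1 - α i) * Q0 i))) := fun i =>
    aux_quad _ _ _ _ (div_pos (hP0 i) (mul_pos (sub_pos.2 (hα1 i)) (hQ0 i)))
  have h2 : ∀ i, τs * x.zs i - τb * x.zb i
      + (P0 i * x.l i - P0 i / (α i * Q0 i) * x.l i ^ 2 / 2) - Cg i (x.g i)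
      ≤ τs * R i + (P0 i - τs) ^ 2 / (2 * (P0 i / (α i * Q0 i))) + m i := by
    intro i
    have e1 := aux_quad (P0 i) (P0 i / (α i * Q0 i)) (x.l i) τs
      (div_pos (hP0 i) (mul_pos (hα0 i) (hQ0 i)))
    have e2 := hm i (x.g i) ⟨hg i, hgp i⟩
    have e3 : x.zs i = x.zb i + x.g i + R i - x.l i := by linarith [hbal i]
    have e4 := mul_nonneg (sub_nonneg.2 hτ) (hzb i)
    rw [e3]
    linarith
  have h3 : 0 ≤ ∑ i, ∑ h, (a i h * x.gih i h + (1 / 2) * A i h * (x.gih i h) ^ 2) := by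
    refine Finset.sum_nonneg fun i _ => Finset.sum_nonneg fun h _ => ?_
    have := ha i h
    have := hA i h
    have := hgih i h
    positivity
  have s1 := Finset.sum_le_sum fun i (_ : i ∈ Finset.univ) => h1 i
  have s2 := Finset.sum_le_sum fun i (_ : i ∈ Finset.univ) => h2 i
  linarith

/-- (Finiteness and convexity of the optimal value function.) For every `(τb, τs)` with
`τs ≤ τb` the supremum defining `V` is finite (attained as a least upper bound in `ℝ`),
and `V` is convex on the rate set `𝒯`. -/
theorem value_function_finite_and_convex
    (N K : ℕ) (hN : 1 ≤ N)
    (H : Fin N → Type) [∀ i, Fintype (H i)]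
    (P0 Q0 α R Gp : Fin N → ℝ) (Cg : Fin N → ℝ → ℝ)
    (a A Gcap : (i : Fin N) → H i → ℝ)
    (T : Fin K → ℝ) (PTDF : Fin K → Fin N → ℝ)
    (hP0 : ∀ i, 0 < P0 i) (hQ0 : ∀ i, 0 < Q0 i)
    (hα0 : ∀ i, 0 < α i) (hα1 : ∀ i, α i < 1)
    (hR : ∀ i, 0 < R i) (hGp : ∀ i, 0 ≤ Gp i)
    (hCg : ∀ i, ContDiff ℝ 1 (Cg i)) (hCgconv : ∀ i, StrictConvexOn ℝ Set.univ (Cg i))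
    (hGcap : ∀ i (h : H i), 0 ≤ Gcap i h)
    (ha : ∀ i (h : H i), 0 < a i h) (hA : ∀ i (h : H i), 0 < A i h)
    (hT : ∀ k, 0 < T k)
    (τhat τlow : ℝ) (hτhat : 0 < τhat) (hτlow : τlow < 0) :
    (∀ τb τs : ℝ, τs ≤ τb →
      ∃ v : ℝ, IsLUB ((fun x => surplus P0 Q0 α Cg a A τb τs x) ''
        {x : LVec N H | FeasX R Gp Gcap T PTDF x}) v) ∧
    ConvexOn ℝ (Tset τhat τlow)
      (fun τ => Vval P0 Q0 α Cg a A Gcap R Gp T PTDF τ) := by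
  have hne : {x : LVec N H | FeasX R Gp Gcap T PTDF x}.Nonempty := by
    refine ⟨⟨0, R, 0, 0, 0, fun _ _ => 0, 0⟩, ?_⟩
    simp only [Set.mem_setOf_eq, FeasX]
    refine ⟨?_, fun i => (hR i).le, ?_, ?_, ?_, ?_, ?_, ?_, ?_, ?_, ?_, ?_⟩ <;>
      simp [hGp, hGcap, fun k => (hT k).le]
  have hb : ∀ τb τs : ℝ, τs ≤ τb → _ := fun τb τs h =>
    aux_bdd P0 Q0 α R Gp Cg a A Gcap T PTDF hP0 hQ0 hα0 hα1 hCg ha hA τb τs h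
  refine ⟨fun τb τs h => ⟨_, isLUB_csSup (hne.image _) (hb τb τs h)⟩, ?_, ?_⟩
  · rintro ⟨p, q⟩ ⟨h1, h2, h3, h4⟩ ⟨p', q'⟩ ⟨h1', h2', h3', h4'⟩ s t hs ht hst
    obtain rfl : t = 1 - s := by linarith
    simp only [Tset, Set.mem_setOf_eq, Prod.smul_mk, Prod.mk_add_mk, smul_eq_mul] at *
    refine ⟨by positivity, ?_, ?_, ?_⟩ <;> nlinarith
  · rintro ⟨p, q⟩ ⟨h1, h2, h3, h4⟩ ⟨p', q'⟩ ⟨h1', h2', h3', h4'⟩ s t hs ht hst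
    simp only [Vval, Prod.smul_mk, Prod.mk_add_mk, smul_eq_mul] at *
    apply csSup_le (hne.image _)
    rintro _ ⟨x, hx, rfl⟩
    have k1 := mul_le_mul_of_nonneg_left (le_csSup (hb p q h4) ⟨x, hx, rfl⟩) hs
    have k2 := mul_le_mul_of_nonneg_left (le_csSup (hb p' q' h4') ⟨x, hx, rfl⟩) ht
    refine le_trans (le_of_eq ?_) (add_le_add k1 k2)
    simp only
    rw [aux_affine _ _ _ _ _ _ (s * p + t * p'), aux_affine _ _ _ _ _ _ p q,
      aux_affine _ _ _ _ _ _ p' q']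
    obtain rfl : t = 1 - s := by linarith
    ring
end
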